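/- Let n ≥ 1, α ∈ ℕⁿ a multi-index, and ξ ∈ ℝⁿ. Define ψ_α^ξ(v) = ∏_{j=1}^n φ_{α_j}(v_j + 2iξ_j) for v ∈ ℝⁿ. Then for every v ∈ ℝⁿ, −Δ_v ψ_α^ξ(v) + (|v|²/4 − n/2 + i v·ξ)·ψ_α^ξ(v) = (|α| + |ξ|²)·ψ_α^ξ(v), where |α| = α_1 + ⋯ + α_n. That is, ψ_α^ξ is an eigenfunction of the partially Fourier-transformed free Kramers–Fokker–Planck operator P̂₀(ξ) = −Δ_v + |v|²/4 − n/2 + i v·ξ with eigenvalue |α| + |ξ|². -/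

import Mathlib

/-- The normalized Hermite function `φ_j(z) = (j!·√(2π))^(−1/2)·exp(−z²/4)·F_j(z)`,
extended to an entire function on `ℂ`. -/
noncomputable def hermiteFun (j : ℕ) (z : ℂ) : ℂ :=
  ((((j.factorial : ℝ) * Real.sqrt (2 * Real.pi)) ^ (-(1 : ℝ) / 2) : ℝ) : ℂ) *
    Complex.exp (-z ^ 2 / 4) * Polynomial.aeval z (Polynomial.hermite j)

/-- `ψ_α^ξ(v) = ∏_j φ_{α_j}(v_j + 2iξ_j)`. -/
noncomputable def psiFun {n : ℕ} (α : Fin n → ℕ) (ξ : Fin n → ℝ) (v : Fin n → ℝ) : ℂ :=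
  ∏ j, hermiteFun (α j) ((v j : ℂ) + 2 * Complex.I * (ξ j : ℂ))

/-!
Hermite's equation `F'' = s F' - k F`, conjugated by the Gaussian `exp (-s² / 4)`, says that the
entire function `φ_k` satisfies `φ_k'' = (z² / 4 - 1 / 2 - k) φ_k` on all of `ℂ`, in particular on
the horizontal line `z = v_j + 2 i ξ_j`. There `z² / 4 = v_j² / 4 + i v_j ξ_j - ξ_j²`, so the
complex shift produces both the term `i v · ξ` and the summand `|ξ|²` of the eigenvalue. Since
`ψ_α^ξ` is a product of functions of one coordinate each, the Laplacian adds these equations up.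
-/

section HermitePolynomial

open Polynomial

theorem derivative_hermite_succ (k : ℕ) :
    derivative (hermite (k + 1)) = ((k : ℤ[X]) + 1) * hermite k := by
  induction k with
  | zero => simp
  | succ k ih =>
    rw [hermite_succ (k + 1), derivative_sub, derivative_mul, derivative_X, ih, derivative_mul,
      derivative_add, derivative_natCast, derivative_one, hermite_succ k]
    push_cast
    ring

theorem derivative_derivative_hermite (k : ℕ) :
    derivative (derivative (hermite k)) = X * derivative (hermite k) - (k : ℤ[X]) * hermite k := by
  have h := derivative_hermite_succ k
  rw [hermite_succ, derivative_sub, derivative_mul, derivative_X] at h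
  linear_combination -h

end HermitePolynomial

section HermiteFunction

open Complex

theorem hasDerivAt_exp_neg_sq_div_four_mul {f : ℂ → ℂ} {f' z : ℂ} (hf : HasDerivAt f f' z) :
    HasDerivAt (fun w ↦ exp (-w ^ 2 / 4) * f w) (exp (-z ^ 2 / 4) * (f' - z / 2 * f z)) z := by
  have hexp : HasDerivAt (fun w : ℂ ↦ exp (-w ^ 2 / 4)) (exp (-z ^ 2 / 4) * (-(2 * z) / 4)) z := by
    simpa using ((hasDerivAt_pow 2 z).fun_neg.div_const 4).cexp
  exact (hexp.fun_mul hf).congr_deriv (by ring)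

theorem deriv_deriv_exp_neg_sq_div_four_mul {f : ℂ → ℂ} (hf : Differentiable ℂ f) (z : ℂ) :
    deriv (deriv fun w ↦ exp (-w ^ 2 / 4) * f w) z =
      exp (-z ^ 2 / 4) * (deriv (deriv f) z - z * deriv f z + (z ^ 2 / 4 - 1 / 2) * f z) := by
  have hfirst : deriv (fun w ↦ exp (-w ^ 2 / 4) * f w) =
      fun w ↦ exp (-w ^ 2 / 4) * (deriv f w - w / 2 * f w) :=
    funext fun w ↦ (hasDerivAt_exp_neg_sq_div_four_mul (hf w).hasDerivAt).deriv
  have hfactor : HasDerivAt (fun w ↦ deriv f w - w / 2 * f w)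
      (deriv (deriv f) z - (1 / 2 * f z + z / 2 * deriv f z)) z :=
    (hf.deriv z).hasDerivAt.fun_sub (((hasDerivAt_id z).div_const 2).fun_mul (hf z).hasDerivAt)
  rw [hfirst, (hasDerivAt_exp_neg_sq_div_four_mul hfactor).deriv]
  ring

theorem differentiable_hermiteFun (k : ℕ) : Differentiable ℂ (hermiteFun k) := by
  have hpoly := Polynomial.differentiable_aeval (𝕜 := ℂ) (Polynomial.hermite k)
  unfold hermiteFun
  fun_prop

theorem deriv_deriv_hermiteFun (k : ℕ) (z : ℂ) :
    deriv (deriv (hermiteFun k)) z = (z ^ 2 / 4 - 1 / 2 - k) * hermiteFun k z := by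
  set c : ℂ := (((k.factorial * √(2 * Real.pi)) ^ (-(1 : ℝ) / 2) : ℝ) : ℂ) with hc
  have hfactor : hermiteFun k =
      fun w ↦ exp (-w ^ 2 / 4) * (c * Polynomial.aeval w (Polynomial.hermite k)) := by
    funext w
    rw [hermiteFun, ← hc]
    ring
  have hderiv (p : Polynomial ℤ) : deriv (fun w : ℂ ↦ c * Polynomial.aeval w p) =
      fun w ↦ c * Polynomial.aeval w (Polynomial.derivative p) := by
    funext w
    rw [deriv_const_mul_field, Polynomial.deriv_aeval]
  have hode := congrArg (Polynomial.aeval z) (derivative_derivative_hermite k)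
  simp only [map_sub, map_mul, Polynomial.aeval_X, map_natCast] at hode
  rw [hfactor, deriv_deriv_exp_neg_sq_div_four_mul
    ((Polynomial.differentiable_aeval _).const_mul c), hderiv, hderiv]
  linear_combination exp (-z ^ 2 / 4) * c * hode

end HermiteFunction

section RealLine

theorem differentiable_comp_ofReal_add {F : ℂ → ℂ} (hF : Differentiable ℂ F) (a : ℂ) :
    Differentiable ℝ fun t : ℝ ↦ F (t + a) :=
  fun t ↦ ((hF (t + a)).hasDerivAt.comp_add_const (t : ℂ) a).comp_ofReal.differentiableAt

theorem deriv_comp_ofReal_add {F : ℂ → ℂ} (hF : Differentiable ℂ F) (a : ℂ) :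
    deriv (fun t : ℝ ↦ F (t + a)) = fun t : ℝ ↦ deriv F (t + a) :=
  funext fun t ↦ ((hF (t + a)).hasDerivAt.comp_add_const (t : ℂ) a).comp_ofReal.deriv

end RealLine

section ProductOfCoordinateFunctions

theorem prod_erase_update_apply {ι β M : Type*} [DecidableEq ι] [CommMonoid M] (s : Finset ι)
    (g : ι → β → M) (j : ι) (d : β → M) (w : ι → β) :
    ∏ i ∈ s.erase j, Function.update g j d i (w i) = ∏ i ∈ s.erase j, g i (w i) :=
  Finset.prod_congr rfl fun i hi ↦ by rw [Function.update_of_ne (Finset.ne_of_mem_erase hi)]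

variable {𝕜 𝔸 ι : Type*} [NontriviallyNormedField 𝕜] [NormedCommRing 𝔸] [NormedAlgebra 𝕜 𝔸]
  [Fintype ι] [DecidableEq ι] {g : ι → 𝕜 → 𝔸}

theorem fderiv_prod_apply_single {w : ι → 𝕜} (hg : ∀ i, DifferentiableAt 𝕜 (g i) (w i)) (j : ι) :
    fderiv 𝕜 (fun u ↦ ∏ i, g i (u i)) w (Pi.single j 1) =
      deriv (g j) (w j) * ∏ i ∈ Finset.univ.erase j, g i (w i) := by
  have hfactor (i : ι) : HasFDerivAt (fun u : ι → 𝕜 ↦ g i (u i))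
      ((fderiv 𝕜 (g i) (w i)).comp (ContinuousLinearMap.proj i)) w :=
    (hg i).hasFDerivAt.comp w (hasFDerivAt_apply i w)
  rw [(HasFDerivAt.finsetProd fun i _ ↦ hfactor i).fderiv, sum_apply, Finset.sum_eq_single j]
  · simp [mul_comm]
  · intro i _ hij
    simp [hij]
  · simp

theorem fderiv_fderiv_prod_apply_single (hg : ∀ i, Differentiable 𝕜 (g i)) {j : ι}
    (hg' : Differentiable 𝕜 (deriv (g j))) (v : ι → 𝕜) :
    fderiv 𝕜 (fun w ↦ fderiv 𝕜 (fun u ↦ ∏ i, g i (u i)) w (Pi.single j 1)) v (Pi.single j 1) =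
      deriv (deriv (g j)) (v j) * ∏ i ∈ Finset.univ.erase j, g i (v i) := by
  have hfirst : (fun w ↦ fderiv 𝕜 (fun u ↦ ∏ i, g i (u i)) w (Pi.single j 1)) =
      fun w ↦ ∏ i, Function.update g j (deriv (g j)) i (w i) := by
    funext w
    rw [fderiv_prod_apply_single fun i ↦ hg i (w i),
      ← Finset.mul_prod_erase _ _ (Finset.mem_univ j), Function.update_self,
      prod_erase_update_apply]
  have hupdate : ∀ i, Differentiable 𝕜 (Function.update g j (deriv (g j)) i) :=
    (Function.forall_update_iff g fun _ f ↦ Differentiable 𝕜 f).2 ⟨hg', fun i _ ↦ hg i⟩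
  rw [hfirst, fderiv_prod_apply_single fun i ↦ hupdate i (v i), Function.update_self,
    prod_erase_update_apply]

end ProductOfCoordinateFunctions

section Psi

variable {n : ℕ} (α : Fin n → ℕ) (ξ v : Fin n → ℝ)

theorem fderiv_fderiv_psiFun_apply_single (j : Fin n) :
    fderiv ℝ (fun w ↦ fderiv ℝ (psiFun α ξ) w (Pi.single j 1)) v (Pi.single j 1) =
      ((v j + 2 * Complex.I * ξ j) ^ 2 / 4 - 1 / 2 - α j) * psiFun α ξ v := by
  let g (i : Fin n) (t : ℝ) : ℂ := hermiteFun (α i) (t + 2 * Complex.I * ξ i)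
  have hφ (i : Fin n) := differentiable_hermiteFun (α i)
  have hg (i : Fin n) : Differentiable ℝ (g i) := differentiable_comp_ofReal_add (hφ i) _
  have hderiv : deriv (g j) = fun t : ℝ ↦ deriv (hermiteFun (α j)) (t + 2 * Complex.I * ξ j) :=
    deriv_comp_ofReal_add (hφ j) _
  have hderiv_diff : Differentiable ℝ (deriv (g j)) :=
    hderiv ▸ differentiable_comp_ofReal_add (hφ j).deriv _
  have hderiv_deriv : deriv (deriv (g j)) (v j) =
      ((v j + 2 * Complex.I * ξ j) ^ 2 / 4 - 1 / 2 - α j) * g j (v j) := by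
    rw [hderiv, deriv_comp_ofReal_add (hφ j).deriv]
    exact deriv_deriv_hermiteFun _ _
  calc
    _ = deriv (deriv (g j)) (v j) * ∏ i ∈ Finset.univ.erase j, g i (v i) :=
      fderiv_fderiv_prod_apply_single hg hderiv_diff v
    _ = _ := by
      rw [hderiv_deriv, mul_assoc,
        Finset.mul_prod_erase _ (fun i ↦ g i (v i)) (Finset.mem_univ j), psiFun]

theorem sum_shifted_sq_div_four_sub_half_sub :
    ∑ j, ((v j + 2 * Complex.I * ξ j) ^ 2 / 4 - 1 / 2 - α j) =
      ((∑ j, v j ^ 2 : ℝ) : ℂ) / 4 - n / 2 + Complex.I * ((∑ j, v j * ξ j : ℝ) : ℂ)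
        - (((∑ j, α j : ℕ) : ℂ) + ((∑ j, ξ j ^ 2 : ℝ) : ℂ)) := by
  have hsummand (j : Fin n) : (v j + 2 * Complex.I * ξ j) ^ 2 / 4 - 1 / 2 - α j =
      (v j : ℂ) ^ 2 / 4 - 1 / 2 + Complex.I * (v j * ξ j) - (α j + (ξ j : ℂ) ^ 2) := by
    linear_combination (ξ j : ℂ) ^ 2 * Complex.I_sq
  simp only [hsummand, Finset.sum_sub_distrib, Finset.sum_add_distrib, ← Finset.sum_div,
    ← Finset.mul_sum, Finset.sum_const, Finset.card_univ, Fintype.card_fin, nsmul_eq_mul]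
  push_cast
  ring

end Psi

/-- `ψ_α^ξ` is an eigenfunction of `P̂₀(ξ) = −Δ_v + |v|²/4 − n/2 + i v·ξ`
with eigenvalue `|α| + |ξ|²`. -/
theorem stmt_8 (n : ℕ) (hn : 1 ≤ n) (α : Fin n → ℕ) (ξ : Fin n → ℝ) :
    ∀ v : Fin n → ℝ,
      -(∑ j, fderiv ℝ (fun w => fderiv ℝ (psiFun α ξ) w (Pi.single j 1)) v (Pi.single j 1))
        + (((∑ j, (v j) ^ 2 : ℝ) : ℂ) / 4 - (n : ℂ) / 2
            + Complex.I * ((∑ j, v j * ξ j : ℝ) : ℂ)) * psiFun α ξ v =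
      (((∑ j, α j : ℕ) : ℂ) + ((∑ j, (ξ j) ^ 2 : ℝ) : ℂ)) * psiFun α ξ v := by
  intro v
  simp only [fderiv_fderiv_psiFun_apply_single]
  rw [← Finset.sum_mul, sum_shifted_sq_div_four_sub_half_sub]
  ring
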